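/- arXiv:1908.01223 — 2 statements merged into one kernel-verified Lean document; each statement's English description precedes it below -/
import Mathlib

section
/- A graph G is P4-sparse if and only if G contains no induced subgraph isomorphic to any of the following seven graphs: P5 (the path on five vertices); C5 (the cycle on five vertices); the complement of P5; the pan (the graph obtained from a cycle on four vertices by adding a pendant vertex adjacent to exactly one cycle vertex); the complement of the pan; the fork (the tree on five vertices obtained from the star K_{1,3} by subdividing one edge, i.e., the tree with degree sequence 3,2,1,1,1); and the kite (the complement of the fork). -/
/-!
The triangle-free graphs obtained from a `P4` by adding a non-isolated vertex are `P5`, `C5`, the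
pan and the fork. Hence in a graph omitting these, the neighbourhood in a `P4` of an outside vertex
is empty or contains an edge. Complementation maps `P4`s to `P4`s, so if the complement omits
these graphs too, the non-neighbourhood is empty or contains a non-edge, and the vertex sees none
of the `P4`, exactly its midpoints, or all of it. Such a vertex belongs to no second `P4` of the
five vertices. Conversely each of the four graphs has two `P4`s, and `P4`-sparseness is inherited
by induced subgraphs and by complements.
-/

open SimpleGraph

variable {V : Type*}

/-- `a, b, c, d` form an induced path on four vertices (a `P4`) in `G`. -/
def IsP4 (G : SimpleGraph V) (a b c d : V) : Prop :=
  a ≠ b ∧ a ≠ c ∧ a ≠ d ∧ b ≠ c ∧ b ≠ d ∧ c ≠ d ∧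
    G.Adj a b ∧ G.Adj b c ∧ G.Adj c d ∧ ¬G.Adj a c ∧ ¬G.Adj a d ∧ ¬G.Adj b d

/-- A graph is a cograph if it contains no induced `P4`. -/
def IsCograph (G : SimpleGraph V) : Prop :=
  ∀ a b c d : V, ¬IsP4 G a b c d

/-- The vertex set `A` induces a `P4` in `G`. -/
def InducesP4 (G : SimpleGraph V) (A : Set V) : Prop :=
  ∃ a b c d : V, IsP4 G a b c d ∧ A = {a, b, c, d}

/-- `G` is `P4`-sparse: every set of five vertices induces at most one `P4`. -/
def P4Sparse (G : SimpleGraph V) : Prop :=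
  ∀ s : Set V, s.ncard = 5 →
    ∀ A B : Set V, A ⊆ s → B ⊆ s → InducesP4 G A → InducesP4 G B → A = B

/-- `F` is a deletion set of `G`: a set of edges of `G` whose removal yields a cograph. -/
def IsDeletionSet (G : SimpleGraph V) (F : Set (Sym2 V)) : Prop :=
  F ⊆ G.edgeSet ∧ IsCograph (G.deleteEdges F)

/-- The minimum size of a deletion set of `G`. -/
noncomputable def cographAlpha (G : SimpleGraph V) : ℕ :=
  sInf {n | ∃ F : Set (Sym2 V), IsDeletionSet G F ∧ F.ncard = n}

/-- The path on five vertices. -/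
def p5 : SimpleGraph (Fin 5) :=
  SimpleGraph.fromEdgeSet {s(0, 1), s(1, 2), s(2, 3), s(3, 4)}

/-- The cycle on five vertices. -/
def c5 : SimpleGraph (Fin 5) :=
  SimpleGraph.fromEdgeSet {s(0, 1), s(1, 2), s(2, 3), s(3, 4), s(4, 0)}

/-- The pan: a four-cycle `0 1 2 3` together with a pendant vertex `4` adjacent to `0`. -/
def pan : SimpleGraph (Fin 5) :=
  SimpleGraph.fromEdgeSet {s(0, 1), s(1, 2), s(2, 3), s(3, 0), s(4, 0)}

/-- The fork: the tree obtained from the star `K_{1,3}` (centered at `1`) by subdividing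
one edge; it has degree sequence `3,2,1,1,1`. -/
def fork : SimpleGraph (Fin 5) :=
  SimpleGraph.fromEdgeSet {s(0, 1), s(1, 2), s(1, 3), s(3, 4)}

section InducedPaths

variable {G : SimpleGraph V} {a b c d e : V} {A : Set V}

lemma IsP4.reverse (h : IsP4 G a b c d) : IsP4 G d c b a := by
  simp only [IsP4] at h ⊢
  grind [SimpleGraph.adj_comm]

lemma IsP4.compl (h : IsP4 G a b c d) : IsP4 Gᶜ b d a c := by
  simp only [IsP4, compl_adj] at h ⊢
  grind [SimpleGraph.adj_comm]

lemma IsP4.map {W : Type*} {H : SimpleGraph W} {a b c d : W} (h : IsP4 H a b c d) (f : H ↪g G) :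
    IsP4 G (f a) (f b) (f c) (f d) := by
  simpa only [IsP4, ne_eq, f.injective.eq_iff, f.map_adj_iff] using h

lemma InducesP4.compl (hA : InducesP4 G A) : InducesP4 Gᶜ A := by
  obtain ⟨a, b, c, d, h, rfl⟩ := hA
  exact ⟨b, d, a, c, h.compl, by grind⟩

lemma inducesP4_compl_iff : InducesP4 Gᶜ A ↔ InducesP4 G A :=
  ⟨fun hA => compl_compl G ▸ hA.compl, InducesP4.compl⟩

lemma InducesP4.image {W : Type*} {H : SimpleGraph W} {A : Set W} (hA : InducesP4 H A)
    (f : H ↪g G) : InducesP4 G (f '' A) := by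
  obtain ⟨a, b, c, d, h, rfl⟩ := hA
  exact ⟨f a, f b, f c, f d, h.map f, by simp only [Set.image_insert_eq, Set.image_singleton]⟩

lemma InducesP4.ncard_eq (hA : InducesP4 G A) : A.ncard = 4 := by
  obtain ⟨a, b, c, d, ⟨hab, hac, had, hbc, hbd, hcd, -⟩, rfl⟩ := hA
  rw [Set.ncard_insert_of_notMem (by simp [hab, hac, had]),
    Set.ncard_eq_three.mpr ⟨b, c, d, hbc, hbd, hcd, rfl⟩]

lemma InducesP4.finite (hA : InducesP4 G A) : A.Finite :=
  Set.finite_of_ncard_ne_zero (by simp [hA.ncard_eq])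

lemma InducesP4.exists_isP4_or_isP4_compl (hA : InducesP4 G A) (he : e ∈ A) :
    ∃ x y z, A = {e, x, y, z} ∧ (IsP4 G e x y z ∨ IsP4 Gᶜ e x y z) := by
  obtain ⟨a, b, c, d, h, rfl⟩ := hA
  obtain rfl | rfl | rfl | rfl := he
  · exact ⟨b, c, d, rfl, .inl h⟩
  · exact ⟨d, a, c, by grind, .inr h.compl⟩
  · exact ⟨a, d, b, by grind, .inr h.reverse.compl⟩
  · exact ⟨c, b, a, by grind, .inl h.reverse⟩

end InducedPaths

section Partners

variable {G : SimpleGraph V} {a b c d e : V}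

/-- A partner of a `P4` with vertex set `A` is an outside vertex lying in a further `P4` induced
by `A` and that vertex; `P4`-sparseness says that there are no partners. -/
def IsPartner (G : SimpleGraph V) (A : Set V) (e : V) : Prop :=
  e ∉ A ∧ ∃ B ⊆ insert e A, e ∈ B ∧ InducesP4 G B

lemma p4Sparse_iff_forall_not_isPartner :
    P4Sparse G ↔ ∀ A e, InducesP4 G A → ¬IsPartner G A e := by
  constructor
  · rintro hG A e hA ⟨heA, B, hB, heB, hPB⟩
    have hcard : (insert e A).ncard = 5 := by
      rw [Set.ncard_insert_of_notMem heA hA.finite, hA.ncard_eq]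
    exact heA (hG _ hcard A B (Set.subset_insert e A) hB hA hPB ▸ heB)
  · intro hG s hs A B hAs hBs hA hB
    by_contra hne
    have hBA : ¬B ⊆ A := fun hsub =>
      hne (Set.eq_of_subset_of_ncard_le hsub (by rw [hA.ncard_eq, hB.ncard_eq]) hA.finite).symm
    obtain ⟨e, heB, heA⟩ := Set.not_subset.mp hBA
    have hins : insert e A = s :=
      Set.eq_of_subset_of_ncard_le (Set.insert_subset (hBs heB) hAs)
        (by rw [Set.ncard_insert_of_notMem heA hA.finite, hA.ncard_eq, hs])
        (Set.finite_of_ncard_ne_zero (by simp [hs]))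
    exact hG A e hA ⟨heA, B, hins ▸ hBs, heB, hB⟩

/-- Compatibility of a vertex `e` with a path `a, b, c, d`: it sees none of the path, exactly the
midpoints `b, c`, or all of it. -/
def IsCompatible (G : SimpleGraph V) (a b c d e : V) : Prop :=
  (G.Adj e a ↔ G.Adj e d) ∧ (G.Adj e b ↔ G.Adj e c) ∧ (G.Adj e a → G.Adj e b)

lemma IsCompatible.compl (h : IsCompatible G a b c d e) (he : e ∉ ({a, b, c, d} : Set V)) :
    IsCompatible Gᶜ b d a c e := by
  simp only [IsCompatible, compl_adj] at h ⊢
  grind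

lemma IsCompatible.not_isP4 (hcomp : IsCompatible G a b c d e) (h : IsP4 G a b c d) {x y z : V}
    (hsub : ({e, x, y, z} : Set V) ⊆ {e, a, b, c, d}) : ¬IsP4 G e x y z := by
  rintro ⟨hx_ne, hy_ne, hz_ne, -, -, -, hex, -, hyz, hey, hez, -⟩
  have hpath {v : V} (hv : v ∈ ({e, x, y, z} : Set V)) (hne : e ≠ v) :
      v = a ∨ v = b ∨ v = c ∨ v = d := (hsub hv).resolve_left hne.symm
  obtain ⟨hends, hmids, hend_mid⟩ := hcomp
  have hb : G.Adj e b := by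
    obtain rfl | rfl | rfl | rfl := hpath (v := x) (by simp) hx_ne <;> tauto
  have hend {v : V} (hv : v ∈ ({e, x, y, z} : Set V)) (hne : e ≠ v) (hev : ¬G.Adj e v) :
      v = a ∨ v = d := by
    obtain rfl | rfl | rfl | rfl := hpath hv hne <;> tauto
  have hy := hend (by simp) hy_ne hey
  have hz := hend (by simp) hz_ne hez
  grind [IsP4, SimpleGraph.adj_comm, SimpleGraph.irrefl]

lemma IsCompatible.not_isPartner (hcomp : IsCompatible G a b c d e) (h : IsP4 G a b c d) :
    ¬IsPartner G {a, b, c, d} e := by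
  rintro ⟨he, B, hB, heB, hPB⟩
  obtain ⟨x, y, z, rfl, hP | hP⟩ := hPB.exists_isP4_or_isP4_compl heB
  · exact hcomp.not_isP4 h hB hP
  · exact (hcomp.compl he).not_isP4 h.compl (by grind) hP

end Partners

section Hereditary

variable {G : SimpleGraph V}

lemma p4Sparse_compl_iff : P4Sparse Gᶜ ↔ P4Sparse G := by
  simp only [P4Sparse, inducesP4_compl_iff]

lemma P4Sparse.of_embedding {W : Type*} {H : SimpleGraph W} (hG : P4Sparse G) (f : H ↪g G) :
    P4Sparse H := by
  intro s hs A B hAs hBs hA hB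
  have hcard : (f '' s).ncard = 5 := by rw [Set.ncard_image_of_injective s f.injective, hs]
  exact f.injective.image_injective <|
    hG _ hcard _ _ (Set.image_mono hAs) (Set.image_mono hBs) (hA.image f) (hB.image f)

lemma not_p4Sparse_p5 : ¬P4Sparse p5 := fun h =>
  p4Sparse_iff_forall_not_isPartner.mp h {0, 1, 2, 3} 4
    ⟨0, 1, 2, 3, by simp [IsP4, p5], rfl⟩
    ⟨by simp, {1, 2, 3, 4}, by grind, by simp, 1, 2, 3, 4, by simp [IsP4, p5], rfl⟩

lemma not_p4Sparse_c5 : ¬P4Sparse c5 := fun h =>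
  p4Sparse_iff_forall_not_isPartner.mp h {0, 1, 2, 3} 4
    ⟨0, 1, 2, 3, by simp [IsP4, c5], rfl⟩
    ⟨by simp, {1, 2, 3, 4}, by grind, by simp, 1, 2, 3, 4, by simp [IsP4, c5], rfl⟩

lemma not_p4Sparse_pan : ¬P4Sparse pan := fun h =>
  p4Sparse_iff_forall_not_isPartner.mp h {4, 0, 1, 2} 3
    ⟨4, 0, 1, 2, by simp [IsP4, pan], rfl⟩
    ⟨by simp, {4, 0, 3, 2}, by grind, by simp, 4, 0, 3, 2, by simp [IsP4, pan], rfl⟩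

lemma not_p4Sparse_fork : ¬P4Sparse fork := fun h =>
  p4Sparse_iff_forall_not_isPartner.mp h {0, 1, 3, 4} 2
    ⟨0, 1, 3, 4, by simp [IsP4, fork], rfl⟩
    ⟨by simp, {2, 1, 3, 4}, by grind, by simp, 2, 1, 3, 4, by simp [IsP4, fork], rfl⟩

end Hereditary

section Extensions

variable {G : SimpleGraph V} {a b c d e : V}

lemma nonempty_embedding_of_forall_lt {ι : Type*} [LinearOrder ι] {H : SimpleGraph ι} (v : ι → V)
    (hv : ∀ i j, i < j → v i ≠ v j ∧ (G.Adj (v i) (v j) ↔ H.Adj i j)) : Nonempty (H ↪g G) := by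
  have hinj : Function.Injective v := .of_lt_imp_ne fun i j hij => (hv i j hij).1
  refine ⟨⟨⟨v, hinj⟩, fun {i j} => ?_⟩⟩
  change G.Adj (v i) (v j) ↔ H.Adj i j
  obtain hij | rfl | hji := lt_trichotomy i j
  · exact (hv i j hij).2
  · simp only [SimpleGraph.irrefl]
  · rw [G.adj_comm, H.adj_comm, (hv j i hji).2]

lemma IsP4.nonempty_p5_embedding (h : IsP4 G a b c d) (he : e ∉ ({a, b, c, d} : Set V))
    (ha : G.Adj e a) (hb : ¬G.Adj e b) (hc : ¬G.Adj e c) (hd : ¬G.Adj e d) :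
    Nonempty (p5 ↪g G) :=
  nonempty_embedding_of_forall_lt ![e, a, b, c, d] <| by
    simp_all [IsP4, Fin.forall_fin_succ, p5, G.adj_comm, eq_comm]

lemma IsP4.nonempty_c5_embedding (h : IsP4 G a b c d) (he : e ∉ ({a, b, c, d} : Set V))
    (ha : G.Adj e a) (hb : ¬G.Adj e b) (hc : ¬G.Adj e c) (hd : G.Adj e d) :
    Nonempty (c5 ↪g G) :=
  nonempty_embedding_of_forall_lt ![e, a, b, c, d] <| by
    simp_all [IsP4, Fin.forall_fin_succ, c5, G.adj_comm, eq_comm]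

lemma IsP4.nonempty_pan_embedding (h : IsP4 G a b c d) (he : e ∉ ({a, b, c, d} : Set V))
    (ha : G.Adj e a) (hb : ¬G.Adj e b) (hc : G.Adj e c) (hd : ¬G.Adj e d) :
    Nonempty (pan ↪g G) :=
  nonempty_embedding_of_forall_lt ![c, b, a, e, d] <| by
    simp_all [IsP4, Fin.forall_fin_succ, pan, G.adj_comm, eq_comm]

lemma IsP4.nonempty_fork_embedding (h : IsP4 G a b c d) (he : e ∉ ({a, b, c, d} : Set V))
    (ha : ¬G.Adj e a) (hb : G.Adj e b) (hc : ¬G.Adj e c) (hd : ¬G.Adj e d) :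
    Nonempty (fork ↪g G) :=
  nonempty_embedding_of_forall_lt ![a, b, e, c, d] <| by
    simp_all [IsP4, Fin.forall_fin_succ, fork, G.adj_comm, eq_comm]

/-- `G` omits, as induced subgraphs, the triangle-free graphs obtained from a `P4` by adding a
vertex that is not isolated. -/
def OmitsP5C5PanFork (G : SimpleGraph V) : Prop :=
  IsEmpty (p5 ↪g G) ∧ IsEmpty (c5 ↪g G) ∧ IsEmpty (pan ↪g G) ∧ IsEmpty (fork ↪g G)

lemma P4Sparse.omitsP5C5PanFork (hG : P4Sparse G) : OmitsP5C5PanFork G :=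
  ⟨⟨fun f => not_p4Sparse_p5 (hG.of_embedding f)⟩, ⟨fun f => not_p4Sparse_c5 (hG.of_embedding f)⟩,
    ⟨fun f => not_p4Sparse_pan (hG.of_embedding f)⟩,
    ⟨fun f => not_p4Sparse_fork (hG.of_embedding f)⟩⟩

lemma OmitsP5C5PanFork.adj_pair_of_adj_left (hG : OmitsP5C5PanFork G) (h : IsP4 G a b c d)
    (he : e ∉ ({a, b, c, d} : Set V)) (hadj : G.Adj e a ∨ G.Adj e b) :
    G.Adj e a ∧ G.Adj e b ∨ G.Adj e b ∧ G.Adj e c ∨ G.Adj e c ∧ G.Adj e d := by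
  obtain ⟨hp5, hc5, hpan, hfork⟩ := hG
  simp only [← not_nonempty_iff] at hp5 hc5 hpan hfork
  by_contra hno
  rcases hadj with ha | hb
  · have hb : ¬G.Adj e b := by tauto
    by_cases hc : G.Adj e c <;> by_cases hd : G.Adj e d
    · tauto
    · exact hpan (h.nonempty_pan_embedding he ha hb hc hd)
    · exact hc5 (h.nonempty_c5_embedding he ha hb hc hd)
    · exact hp5 (h.nonempty_p5_embedding he ha hb hc hd)
  · have ha : ¬G.Adj e a := by tauto
    have hc : ¬G.Adj e c := by tauto
    by_cases hd : G.Adj e d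
    · exact hpan (h.reverse.nonempty_pan_embedding (by grind) hd hc hb ha)
    · exact hfork (h.nonempty_fork_embedding he ha hb hc hd)

lemma OmitsP5C5PanFork.adj_pair_of_adj (hG : OmitsP5C5PanFork G) (h : IsP4 G a b c d)
    (he : e ∉ ({a, b, c, d} : Set V))
    (hadj : G.Adj e a ∨ G.Adj e b ∨ G.Adj e c ∨ G.Adj e d) :
    G.Adj e a ∧ G.Adj e b ∨ G.Adj e b ∧ G.Adj e c ∨ G.Adj e c ∧ G.Adj e d := by
  have hleft := hG.adj_pair_of_adj_left h he
  have hright := hG.adj_pair_of_adj_left h.reverse (e := e) (by grind)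
  tauto

lemma OmitsP5C5PanFork.isCompatible (hG : OmitsP5C5PanFork G) (hGc : OmitsP5C5PanFork Gᶜ)
    (h : IsP4 G a b c d) (he : e ∉ ({a, b, c, d} : Set V)) : IsCompatible G a b c d e := by
  have hpair := hG.adj_pair_of_adj h he
  have hcopair := hGc.adj_pair_of_adj h.compl (e := e) (by grind)
  simp only [compl_adj] at hcopair
  grind [IsCompatible]

end Extensions

theorem p4Sparse_iff_omitsP5C5PanFork (G : SimpleGraph V) :
    P4Sparse G ↔ OmitsP5C5PanFork G ∧ OmitsP5C5PanFork Gᶜ := by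
  constructor
  · intro hG
    exact ⟨hG.omitsP5C5PanFork, (p4Sparse_compl_iff.mpr hG).omitsP5C5PanFork⟩
  · rintro ⟨hG, hGc⟩
    rw [p4Sparse_iff_forall_not_isPartner]
    rintro _ e ⟨a, b, c, d, h, rfl⟩ hpartner
    exact (hG.isCompatible hGc h hpartner.1).not_isPartner h hpartner

lemma isEmpty_embedding_compl_iff {W : Type*} {G : SimpleGraph V} {H : SimpleGraph W} :
    IsEmpty (H ↪g Gᶜ) ↔ IsEmpty (Hᶜ ↪g G) := by
  rw [Embedding.complEquiv.isEmpty_congr, compl_compl]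

/-- The self-complementarity of `c5`: doubling modulo five maps its edges to its diagonals. -/
def c5IsoCompl : c5 ≃g c5ᶜ where
  toFun i := 2 * i
  invFun i := 3 * i
  left_inv := by decide
  right_inv := by decide
  map_rel_iff' {i j} := by fin_cases i <;> fin_cases j <;> simp [c5]

/-- A graph `G` is `P4`-sparse if and only if it contains no induced subgraph
isomorphic to `P5`, `C5`, the complement of `P5`, the pan, the complement of the pan,
the fork, or the kite (the complement of the fork). -/
theorem p4Sparse_iff_forbidden (G : SimpleGraph V) :
    P4Sparse G ↔
      IsEmpty (p5 ↪g G) ∧ IsEmpty (c5 ↪g G) ∧ IsEmpty (p5ᶜ ↪g G) ∧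
      IsEmpty (pan ↪g G) ∧ IsEmpty (panᶜ ↪g G) ∧
      IsEmpty (fork ↪g G) ∧ IsEmpty (forkᶜ ↪g G) := by
  have hc5 : IsEmpty (c5ᶜ ↪g G) ↔ IsEmpty (c5 ↪g G) :=
    (RelIso.relEmbeddingCongr c5IsoCompl.symm (Iso.refl (G := G))).isEmpty_congr
  simp only [p4Sparse_iff_omitsP5C5PanFork, OmitsP5C5PanFork, isEmpty_embedding_compl_iff, hc5]
  tauto
end

section
/- Let G be a bipartite graph with parts X and Y such that |X| = 2, |Y| >= 2, there is a vertex y in Y that is adjacent to exactly one vertex of X, and every vertex of Y other than y is adjacent to both vertices of X. Then alpha(G) = 1; that is, G is not a cograph, and there is a single edge whose removal from G yields a cograph. -/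
open SimpleGraph

variable {V : Type*}

/-! If `x` is the only neighbour of `y`, `x'` is another vertex of `X` and `z` another vertex of
`Y`, then `y, x, z, x'` is a path whose ends are not adjacent, and in a triangle-free graph such a
path is induced. On the other hand, deleting the edge `yx` isolates `y` and leaves a complete
bipartite graph on the remaining vertices, which is a cograph. -/

section Cographs

variable {G : SimpleGraph V}

theorem isP4_of_cliqueFree_three {a b c d : V} (hG : G.CliqueFree 3) (hab : G.Adj a b)
    (hbc : G.Adj b c) (hcd : G.Adj c d) (had : ¬G.Adj a d) : IsP4 G a b c d := by
  classical
  have no_triangle {u v w : V} (huv : G.Adj u v) (hvw : G.Adj v w) : ¬G.Adj u w :=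
    fun huw => hG {u, v, w} (is3Clique_triple_iff.2 ⟨huv, huw, hvw⟩)
  have hac : ¬G.Adj a c := no_triangle hab hbc
  have hbd : ¬G.Adj b d := no_triangle hbc hcd
  refine ⟨hab.ne, ?_, ?_, hbc.ne, ?_, hcd.ne, hab, hbc, hcd, hac, had, hbd⟩
  · rintro rfl
    exact had hcd
  · rintro rfl
    exact hac hcd.symm
  · rintro rfl
    exact had hab

theorem isCograph_of_isCompleteBetween {A B : Set V} (hG : G.IsBipartiteWith A B)
    (hAB : G.IsCompleteBetween A B) : IsCograph G := by
  rintro a b c d ⟨-, -, -, -, -, -, hab, hbc, hcd, -, had, -⟩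
  rcases hG.mem_of_adj hab with ⟨ha, hb⟩ | ⟨ha, hb⟩
  · have hc : c ∈ A := hG.symm.mem_of_mem_adj hb hbc
    exact had (hAB ha (hG.mem_of_mem_adj hc hcd))
  · have hc : c ∈ B := hG.mem_of_mem_adj hb hbc
    exact had (hAB (hG.symm.mem_of_mem_adj hc hcd) ha).symm

theorem isCograph_bot : IsCograph (⊥ : SimpleGraph V) := by
  rintro a b c d ⟨-, -, -, -, -, -, hab, -⟩
  exact hab

theorem isDeletionSet_edgeSet (G : SimpleGraph V) : IsDeletionSet G G.edgeSet :=
  ⟨subset_rfl, by simpa using isCograph_bot⟩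

theorem isDeletionSet_empty_iff : IsDeletionSet G ∅ ↔ IsCograph G := by
  simp [IsDeletionSet]

theorem cographAlpha_le_ncard {F : Set (Sym2 V)} (hF : IsDeletionSet G F) :
    cographAlpha G ≤ F.ncard :=
  Nat.sInf_le ⟨F, hF, rfl⟩

theorem exists_isDeletionSet_ncard_eq (G : SimpleGraph V) :
    ∃ F, IsDeletionSet G F ∧ F.ncard = cographAlpha G :=
  Nat.sInf_mem (s := {n | ∃ F, IsDeletionSet G F ∧ F.ncard = n})
    ⟨_, _, isDeletionSet_edgeSet G, rfl⟩

theorem isCograph_of_cographAlpha_eq_zero (hfin : G.edgeSet.Finite) (h : cographAlpha G = 0) :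
    IsCograph G := by
  obtain ⟨F, hF, hcard⟩ := exists_isDeletionSet_ncard_eq G
  obtain rfl : F = ∅ := (Set.ncard_eq_zero (hfin.subset hF.1)).1 (hcard.trans h)
  exact isDeletionSet_empty_iff.1 hF

theorem cographAlpha_eq_one {e : Sym2 V} (hfin : G.edgeSet.Finite) (hG : ¬IsCograph G)
    (he : e ∈ G.edgeSet) (hdel : IsCograph (G.deleteEdges {e})) : cographAlpha G = 1 := by
  have hle : cographAlpha G ≤ 1 := by
    simpa using cographAlpha_le_ncard ⟨Set.singleton_subset_iff.2 he, hdel⟩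
  have hne : cographAlpha G ≠ 0 := mt (isCograph_of_cographAlpha_eq_zero hfin) hG
  lia

end Cographs

section Bipartite

variable {G : SimpleGraph V} {X Y : Set V}

theorem edgeSet_finite_of_isBipartiteWith (hG : G.IsBipartiteWith X Y) (hX : X.Finite)
    (hY : Y.Finite) : G.edgeSet.Finite := by
  refine ((hX.prod hY).image fun p => s(p.1, p.2)).subset fun e he => ?_
  induction e with | _ u v
  rcases hG.mem_of_adj he with ⟨hu, hv⟩ | ⟨hu, hv⟩
  · exact ⟨(u, v), ⟨hu, hv⟩, rfl⟩
  · exact ⟨(v, u), ⟨hv, hu⟩, Sym2.eq_swap⟩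

theorem cliqueFree_three_of_isBipartiteWith (hG : G.IsBipartiteWith X Y) : G.CliqueFree 3 :=
  hG.isBipartite.cliqueFree (by norm_num)

theorem incidenceSet_eq_singleton_of_neighborSet_eq {v w : V} (h : G.neighborSet v = {w}) :
    G.incidenceSet v = {s(v, w)} := by
  have hadj (u : V) : G.Adj v u ↔ u = w := by
    rw [← mem_neighborSet, h, Set.mem_singleton_iff]
  ext e
  constructor
  · rintro ⟨he, hv⟩
    obtain ⟨u, rfl⟩ := hv
    rw [(hadj u).1 he, Set.mem_singleton_iff]
  · rintro rfl
    exact ⟨(hadj w).2 rfl, Sym2.mem_mk_left v w⟩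

theorem isBipartiteWith_deleteIncidenceSet (hG : G.IsBipartiteWith X Y) (v : V) :
    (G.deleteIncidenceSet v).IsBipartiteWith (X \ {v}) (Y \ {v}) where
  disjoint := hG.disjoint.mono Set.sdiff_subset Set.sdiff_subset
  mem_of_adj u w huw := by
    obtain ⟨hadj, hu, hw⟩ := deleteIncidenceSet_adj.1 huw
    exact (hG.mem_of_adj hadj).imp (fun h => ⟨⟨h.1, hu⟩, h.2, hw⟩)
      (fun h => ⟨⟨h.1, hu⟩, h.2, hw⟩)

theorem isCograph_deleteIncidenceSet {v : V} (hG : G.IsBipartiteWith X Y)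
    (hv : G.IsCompleteBetween (X \ {v}) (Y \ {v})) : IsCograph (G.deleteIncidenceSet v) :=
  isCograph_of_isCompleteBetween (isBipartiteWith_deleteIncidenceSet hG v)
    fun _ hu _ hw => deleteIncidenceSet_adj.2 ⟨hv hu hw, hu.2, hw.2⟩

theorem cographAlpha_special_bipartite_general (hG : G.IsBipartiteWith X Y)
    (hX : 2 ≤ X.ncard) (hY : 2 ≤ Y.ncard)
    (hy : ∃ y ∈ Y, (∃! x, x ∈ X ∧ G.Adj y x) ∧
      ∀ y' ∈ Y, y' ≠ y → ∀ x ∈ X, G.Adj y' x) :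
    ¬IsCograph G ∧ (∃ e ∈ G.edgeSet, IsCograph (G.deleteEdges {e})) ∧
      cographAlpha G = 1 := by
  obtain ⟨y, hyY, ⟨x, ⟨hxX, hyx⟩, hx⟩, hfull⟩ := hy
  obtain ⟨x', hx'X, hx'x⟩ := Set.exists_ne_of_one_lt_ncard hX x
  obtain ⟨z, hzY, hzy⟩ := Set.exists_ne_of_one_lt_ncard hY y
  have hP4 : IsP4 G y x z x' :=
    isP4_of_cliqueFree_three (cliqueFree_three_of_isBipartiteWith hG) hyx
      (hfull z hzY hzy x hxX).symm (hfull z hzY hzy x' hx'X) fun h => hx'x (hx x' ⟨hx'X, h⟩)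
  have hnot : ¬IsCograph G := fun h => h y x z x' hP4
  have hnbr : G.neighborSet y = {x} :=
    Set.eq_singleton_iff_unique_mem.2
      ⟨hyx, fun u hu => hx u ⟨hG.symm.mem_of_mem_adj hyY hu, hu⟩⟩
  have hdel : IsCograph (G.deleteEdges {s(y, x)}) := by
    rw [← incidenceSet_eq_singleton_of_neighborSet_eq hnbr]
    exact isCograph_deleteIncidenceSet hG fun u hu w hw => (hfull w hw.1 hw.2 u hu.1).symm
  have hfin : G.edgeSet.Finite :=
    edgeSet_finite_of_isBipartiteWith hG (Set.finite_of_ncard_pos (by lia))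
      (Set.finite_of_ncard_pos (by lia))
  exact ⟨hnot, ⟨s(y, x), hyx, hdel⟩, cographAlpha_eq_one hfin hnot hyx hdel⟩

end Bipartite

/-- Let `G` be a bipartite graph with parts `X` and `Y` such that `|X| = 2`,
`|Y| ≥ 2`, some vertex `y ∈ Y` is adjacent to exactly one vertex of `X`, and every other
vertex of `Y` is adjacent to both vertices of `X`. Then `α(G) = 1`: `G` is not a cograph and
there is a single edge of `G` whose removal yields a cograph. -/
theorem cographAlpha_special_bipartite (G : SimpleGraph V) (X Y : Set V)
    (hpart : X ∪ Y = Set.univ) (hdisj : Disjoint X Y)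
    (hbip : ∀ u v : V, G.Adj u v → (u ∈ X ∧ v ∈ Y) ∨ (u ∈ Y ∧ v ∈ X))
    (hX : X.ncard = 2) (hY : 2 ≤ Y.ncard)
    (hy : ∃ y ∈ Y, (∃! x, x ∈ X ∧ G.Adj y x) ∧
      ∀ y' ∈ Y, y' ≠ y → ∀ x ∈ X, G.Adj y' x) :
    ¬IsCograph G ∧ (∃ e ∈ G.edgeSet, IsCograph (G.deleteEdges {e})) ∧
      cographAlpha G = 1 :=
  cographAlpha_special_bipartite_general ⟨hdisj, hbip⟩ hX.ge hY hy
end
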